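/- (Variance bound for the CG-DSGLD gradient estimator; core of Theorem 2.) Let S, d, m be positive integers, f : Fin S → ℝ with f s > 0 and ∑_s f s = 1, for each s let N_s be a positive integer and v_{s,1}, …, v_{s,N_s} ∈ ℝ^d, let u_1, …, u_S ∈ ℝ^d with U = ∑_{s=1}^{S} u_s, and suppose for each s that (1/N_s) ∑_{i=1}^{N_s} ‖ v_{s,i} − (1/N_s) u_s ‖² ≤ ε_s². Let V = ∑_{s=1}^{S} ∑_{i=1}^{N_s} v_{s,i}. Consider m independent draws, where each draw j selects a shard s_j with probability f_{s_j} and then an index i_j uniformly from {1, …, N_{s_j}}. Then E‖ (1/m) ∑_{j=1}^{m} [ (1/(f_{s_j})) ( N_{s_j} v_{s_j, i_j} − u_{s_j} ) + U ] − V ‖² ≤ (1/m) ∑_{s=1}^{S} (N_s²/(f s)) ε_s². In particular, the variance of the CG-DSGLD estimator is controlled by the approximation quality constants ε_s² rather than the raw gradient bounds γ_s². -/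

import Mathlib

/-!
The summands of the estimator are independent with mean `V`, so the expected squared error of their
average is `1 / m` times the variance of a single summand. Adding the constant `U` does not change
that variance, which is therefore at most the second moment of the remaining term. Since
`N_s v - u_s = N_s (v - u_s / N_s)`, shard `s` contributes to this second moment exactly
`N_s² / f s` times its mean squared deviation.
-/

section IndependentDraws

variable {J : Type*} [Fintype J] [DecidableEq J]

section PiWeights

variable {A : J → Type*} [∀ j, Fintype (A j)] {R : Type*} [CommSemiring R]

lemma sum_pi_prod_eq_one (p : ∀ j, A j → R) (hp : ∀ j, ∑ a, p j a = 1) :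
    ∑ ω : ∀ j, A j, ∏ j, p j (ω j) = 1 := by
  simp only [← Fintype.prod_sum, hp, Finset.prod_const_one]

lemma sum_pi_prod_mul_eq_sum_compl_sum (p : ∀ j, A j → R) (k : J)
    (F : A k → (∀ j : {j // j ≠ k}, A j) → R) :
    ∑ ω : ∀ j, A j, (∏ j, p j (ω j)) * F (ω k) (fun j => ω j) =
      ∑ ρ : ∀ j : {j // j ≠ k}, A j, (∏ j, p _ (ρ j)) * ∑ a, p k a * F a ρ := by
  calc ∑ ω : ∀ j, A j, (∏ j, p j (ω j)) * F (ω k) (fun j => ω j)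
      = ∑ x : A k × ∀ j : {j // j ≠ k}, A j,
          (p k x.1 * ∏ j, p _ (x.2 j)) * F x.1 x.2 :=
        Fintype.sum_equiv (Equiv.piSplitAt k A) _ _ fun ω => by
          rw [Fintype.prod_eq_mul_prod_subtype_ne _ k]
          rfl
    _ = ∑ ρ : ∀ j : {j // j ≠ k}, A j, (∏ j, p _ (ρ j)) * ∑ a, p k a * F a ρ := by
        rw [Fintype.sum_prod_type_right]
        simp only [Finset.mul_sum]
        exact Finset.sum_congr rfl fun ρ _ => Finset.sum_congr rfl fun a _ => by ring

lemma sum_pi_prod_mul_eval (p : ∀ j, A j → R) (hp : ∀ j, ∑ a, p j a = 1) (k : J)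
    (g : A k → R) :
    ∑ ω : ∀ j, A j, (∏ j, p j (ω j)) * g (ω k) = ∑ a, p k a * g a := by
  rw [sum_pi_prod_mul_eq_sum_compl_sum p k fun a _ => g a, ← Finset.sum_mul,
    sum_pi_prod_eq_one (fun j : {j // j ≠ k} => p j) fun j => hp j, one_mul]

variable {E : Type*} [SeminormedAddCommGroup E] [InnerProductSpace ℝ E]

lemma sum_pi_prod_mul_inner_eq_zero (p : ∀ j, A j → ℝ) (Y : ∀ j, A j → E) {j k : J}
    (hjk : j ≠ k) (hY : ∑ a, p k a • Y k a = 0) :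
    ∑ ω : ∀ j, A j, (∏ l, p l (ω l)) * inner ℝ (Y j (ω j)) (Y k (ω k)) = 0 := by
  rw [sum_pi_prod_mul_eq_sum_compl_sum p k fun a ρ => inner ℝ (Y j (ρ ⟨j, hjk⟩)) (Y k a)]
  refine Finset.sum_eq_zero fun ρ _ => ?_
  simp only [← real_inner_smul_right, ← inner_sum, hY, inner_zero_right, mul_zero]

theorem sum_pi_prod_mul_norm_sum_sq (p : ∀ j, A j → ℝ) (hp : ∀ j, ∑ a, p j a = 1)
    (Y : ∀ j, A j → E) (hY : ∀ j, ∑ a, p j a • Y j a = 0) :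
    ∑ ω : ∀ j, A j, (∏ j, p j (ω j)) * ‖∑ j, Y j (ω j)‖ ^ 2 =
      ∑ j, ∑ a, p j a * ‖Y j a‖ ^ 2 := by
  calc ∑ ω : ∀ j, A j, (∏ j, p j (ω j)) * ‖∑ j, Y j (ω j)‖ ^ 2
      = ∑ j, ∑ k, ∑ ω : ∀ j, A j,
          (∏ l, p l (ω l)) * inner ℝ (Y j (ω j)) (Y k (ω k)) := by
        simp only [← real_inner_self_eq_norm_sq, sum_inner, inner_sum, Finset.mul_sum]
        rw [Finset.sum_comm]
        refine Finset.sum_congr rfl fun j _ => ?_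
        rw [Finset.sum_comm]
        simp only [real_inner_comm]
    _ = ∑ j, ∑ ω : ∀ j, A j, (∏ l, p l (ω l)) * inner ℝ (Y j (ω j)) (Y j (ω j)) :=
        Finset.sum_congr rfl fun j _ => Fintype.sum_eq_single j fun k hkj =>
          sum_pi_prod_mul_inner_eq_zero p Y hkj.symm (hY k)
    _ = ∑ j, ∑ a, p j a * ‖Y j a‖ ^ 2 := by
        simp only [real_inner_self_eq_norm_sq]
        exact Finset.sum_congr rfl fun j _ => sum_pi_prod_mul_eval p hp j fun a => ‖Y j a‖ ^ 2

end PiWeights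

variable {A E : Type*} [Fintype A] [SeminormedAddCommGroup E] [InnerProductSpace ℝ E]

theorem sum_pi_prod_mul_norm_average_sub_sq [Nonempty J] (p : A → ℝ) (hp : ∑ a, p a = 1)
    (X : A → E) {μ : E} (hX : ∑ a, p a • X a = μ) :
    ∑ ω : J → A, (∏ j, p (ω j)) * ‖(1 / (Fintype.card J : ℝ)) • ∑ j, X (ω j) - μ‖ ^ 2 =
      1 / (Fintype.card J : ℝ) * ∑ a, p a * ‖X a - μ‖ ^ 2 := by
  have hJ : (Fintype.card J : ℝ) ≠ 0 := Nat.cast_ne_zero.mpr Fintype.card_ne_zero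
  have centered : ∑ a, p a • (X a - μ) = 0 := by
    simp only [smul_sub, Finset.sum_sub_distrib, hX, ← Finset.sum_smul, hp, one_smul, sub_self]
  have error_eq (ω : J → A) : (1 / (Fintype.card J : ℝ)) • ∑ j, X (ω j) - μ =
      (1 / (Fintype.card J : ℝ)) • ∑ j, (X (ω j) - μ) := by
    rw [Finset.sum_sub_distrib, Finset.sum_const, Finset.card_univ, ← Nat.cast_smul_eq_nsmul ℝ,
      smul_sub, smul_smul, one_div_mul_cancel hJ, one_smul]
  calc ∑ ω : J → A, (∏ j, p (ω j)) * ‖(1 / (Fintype.card J : ℝ)) • ∑ j, X (ω j) - μ‖ ^ 2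
      = (1 / (Fintype.card J : ℝ)) ^ 2 *
          ∑ ω : J → A, (∏ j, p (ω j)) * ‖∑ j, (X (ω j) - μ)‖ ^ 2 := by
        simp only [error_eq, norm_smul, mul_pow, Real.norm_eq_abs, sq_abs, Finset.mul_sum,
          mul_left_comm]
    _ = (1 / (Fintype.card J : ℝ)) ^ 2 *
          (Fintype.card J * ∑ a, p a * ‖X a - μ‖ ^ 2) := by
        rw [sum_pi_prod_mul_norm_sum_sq (fun _ => p) (fun _ => hp) (fun _ a => X a - μ)
          fun _ => centered, Finset.sum_const, Finset.card_univ, nsmul_eq_mul]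
    _ = 1 / (Fintype.card J : ℝ) * ∑ a, p a * ‖X a - μ‖ ^ 2 := by
        field_simp

end IndependentDraws

lemma sum_mul_norm_sub_mean_sq {A E : Type*} [Fintype A] [SeminormedAddCommGroup E]
    [InnerProductSpace ℝ E] (p : A → ℝ) (hp : ∑ a, p a = 1) (X : A → E) {μ : E}
    (hX : ∑ a, p a • X a = μ) :
    ∑ a, p a * ‖X a - μ‖ ^ 2 = ∑ a, p a * ‖X a‖ ^ 2 - ‖μ‖ ^ 2 := by
  have cross : ∑ a, p a * inner ℝ (X a) μ = ‖μ‖ ^ 2 := by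
    simp only [← real_inner_smul_left, ← sum_inner, hX, real_inner_self_eq_norm_sq]
  calc ∑ a, p a * ‖X a - μ‖ ^ 2
      = ∑ a, (p a * ‖X a‖ ^ 2 - 2 * (p a * inner ℝ (X a) μ) + p a * ‖μ‖ ^ 2) :=
        Finset.sum_congr rfl fun a _ => by rw [norm_sub_sq_real]; ring
    _ = ∑ a, p a * ‖X a‖ ^ 2 - 2 * ‖μ‖ ^ 2 + 1 * ‖μ‖ ^ 2 := by
        rw [Finset.sum_add_distrib, Finset.sum_sub_distrib, ← Finset.mul_sum, cross,
          ← Finset.sum_mul, hp]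
    _ = ∑ a, p a * ‖X a‖ ^ 2 - ‖μ‖ ^ 2 := by ring

section ShardedDraws

variable {ι : Type*} {κ : ι → Type*} [∀ s, Fintype (κ s)]

/-- The probability of drawing the data point `a`: its shard is selected with probability `f a.1`
and then the point is selected uniformly within the shard. Data points are pairs of a shard and an
index in it. -/
noncomputable def drawProb (f : ι → ℝ) (a : Σ s, κ s) : ℝ :=
  f a.1 * (1 / (Fintype.card (κ a.1) : ℝ))

/-- The surrogate-corrected gradient of a drawn data point: the rescaled difference between the
shard gradient estimated from that point and the gradient `u` of the log surrogate of its shard.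
The single-draw CG-DSGLD estimator is this vector plus `∑ s, u s`. -/
noncomputable def gradientCorrection {E : Type*} [AddCommGroup E] [Module ℝ E] (f : ι → ℝ)
    (v : ∀ s, κ s → E) (u : ι → E) (a : Σ s, κ s) : E :=
  (1 / f a.1) • ((Fintype.card (κ a.1) : ℝ) • v a.1 a.2 - u a.1)

variable [∀ s, Nonempty (κ s)]

lemma sum_drawProb [Fintype ι] (f : ι → ℝ) : ∑ a : Σ s, κ s, drawProb f a = ∑ s, f s := by
  rw [Fintype.sum_sigma]
  refine Finset.sum_congr rfl fun s _ => ?_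
  have hN : (Fintype.card (κ s) : ℝ) ≠ 0 := Nat.cast_ne_zero.mpr Fintype.card_ne_zero
  change ∑ _ : κ s, f s * (1 / (Fintype.card (κ s) : ℝ)) = f s
  rw [Finset.sum_const, Finset.card_univ, nsmul_eq_mul]
  field_simp

section Module

variable {E : Type*} [AddCommGroup E] [Module ℝ E]

lemma gradientCorrection_eq_smul_sub (f : ι → ℝ) (v : ∀ s, κ s → E) (u : ι → E)
    (a : Σ s, κ s) :
    gradientCorrection f v u a = ((Fintype.card (κ a.1) : ℝ) / f a.1) •
      (v a.1 a.2 - (1 / (Fintype.card (κ a.1) : ℝ)) • u a.1) := by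
  have hN : (Fintype.card (κ a.1) : ℝ) ≠ 0 := Nat.cast_ne_zero.mpr Fintype.card_ne_zero
  rw [gradientCorrection, ← one_div_mul_eq_div (f a.1) (Fintype.card (κ a.1) : ℝ), mul_smul,
    smul_sub (Fintype.card (κ a.1) : ℝ), smul_smul _ _ (u a.1), mul_one_div_cancel hN, one_smul]

lemma sum_drawProb_smul_gradientCorrection [Fintype ι] {f : ι → ℝ} (hf : ∀ s, f s ≠ 0)
    (v : ∀ s, κ s → E) (u : ι → E) :
    ∑ a, drawProb f a • gradientCorrection f v u a = ∑ s, ∑ i, v s i - ∑ s, u s := by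
  rw [Fintype.sum_sigma, ← Finset.sum_sub_distrib]
  refine Finset.sum_congr rfl fun s _ => ?_
  have hN : (Fintype.card (κ s) : ℝ) ≠ 0 := Nat.cast_ne_zero.mpr Fintype.card_ne_zero
  have weight_mul_scale :
      f s * (1 / (Fintype.card (κ s) : ℝ)) * ((Fintype.card (κ s) : ℝ) / f s) = 1 := by
    field_simp [hf s]
  have summand_eq (i : κ s) : drawProb f ⟨s, i⟩ • gradientCorrection f v u ⟨s, i⟩ =
      v s i - (1 / (Fintype.card (κ s) : ℝ)) • u s := by
    rw [gradientCorrection_eq_smul_sub, drawProb, smul_smul, weight_mul_scale, one_smul]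
  simp only [summand_eq, Finset.sum_sub_distrib, Finset.sum_const, Finset.card_univ]
  rw [← Nat.cast_smul_eq_nsmul ℝ, smul_smul, mul_one_div_cancel hN, one_smul]

end Module

variable [Fintype ι] {E : Type*} [SeminormedAddCommGroup E]

lemma sum_drawProb_mul_norm_gradientCorrection_sq [NormedSpace ℝ E] (f : ι → ℝ)
    (v : ∀ s, κ s → E) (u : ι → E) :
    ∑ a, drawProb f a * ‖gradientCorrection f v u a‖ ^ 2 =
      ∑ s, (Fintype.card (κ s) : ℝ) ^ 2 / f s * (1 / (Fintype.card (κ s) : ℝ) *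
        ∑ i, ‖v s i - (1 / (Fintype.card (κ s) : ℝ)) • u s‖ ^ 2) := by
  rw [Fintype.sum_sigma]
  simp only [Finset.mul_sum]
  refine Finset.sum_congr rfl fun s _ => Finset.sum_congr rfl fun i _ => ?_
  rw [gradientCorrection_eq_smul_sub, norm_smul, mul_pow, Real.norm_eq_abs, sq_abs, drawProb]
  rcases eq_or_ne (f s) 0 with hf | hf
  · simp only [hf, zero_mul, div_zero]
  · field_simp

theorem cgdsgld_variance_bound_general [InnerProductSpace ℝ E] {J : Type*} [Fintype J]
    [DecidableEq J] [Nonempty J] (f : ι → ℝ) (hf : ∀ s, 0 < f s) (hsum : ∑ s, f s = 1)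
    (v : ∀ s, κ s → E) (u : ι → E) (ε : ι → ℝ)
    (hε : ∀ s, 1 / (Fintype.card (κ s) : ℝ) *
      ∑ i, ‖v s i - (1 / (Fintype.card (κ s) : ℝ)) • u s‖ ^ 2 ≤ ε s ^ 2) :
    ∑ ω : J → Σ s, κ s,
        (∏ j, f (ω j).1 * (1 / (Fintype.card (κ (ω j).1) : ℝ))) *
          ‖(1 / (Fintype.card J : ℝ)) •
              (∑ j, ((1 / f (ω j).1) •
                  ((Fintype.card (κ (ω j).1) : ℝ) • v (ω j).1 (ω j).2 - u (ω j).1) + ∑ s, u s))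
            - ∑ s, ∑ i, v s i‖ ^ 2
      ≤ 1 / (Fintype.card J : ℝ) *
          ∑ s, (Fintype.card (κ s) : ℝ) ^ 2 / f s * ε s ^ 2 := by
  set U := ∑ s, u s
  set V := ∑ s, ∑ i, v s i
  let p : (Σ s, κ s) → ℝ := drawProb f
  let G : (Σ s, κ s) → E := gradientCorrection f v u
  have hp : ∑ a, p a = 1 := (sum_drawProb f).trans hsum
  have mean_G : ∑ a, p a • G a = V - U :=
    sum_drawProb_smul_gradientCorrection (fun s => (hf s).ne') v u
  have unbiased : ∑ a, p a • (G a + U) = V := by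
    simp only [smul_add, Finset.sum_add_distrib, mean_G, ← Finset.sum_smul, hp, one_smul,
      sub_add_cancel]
  calc _ = 1 / (Fintype.card J : ℝ) * ∑ a, p a * ‖G a + U - V‖ ^ 2 :=
        sum_pi_prod_mul_norm_average_sub_sq p hp (fun a => G a + U) unbiased
    _ = 1 / (Fintype.card J : ℝ) * (∑ a, p a * ‖G a‖ ^ 2 - ‖V - U‖ ^ 2) := by
        simp only [← sum_mul_norm_sub_mean_sq p hp G mean_G, sub_sub_eq_add_sub]
    _ ≤ 1 / (Fintype.card J : ℝ) * ∑ a, p a * ‖G a‖ ^ 2 := by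
        gcongr
        exact sub_le_self _ (sq_nonneg _)
    _ ≤ _ := by
        rw [sum_drawProb_mul_norm_gradientCorrection_sq]
        gcongr with s
        · exact div_nonneg (sq_nonneg _) (hf s).le
        · exact hε s

end ShardedDraws

/-- Variance bound for the CG-DSGLD gradient estimator (core of Theorem 2). Each of
the `m` mini-batch elements is an independent draw `ω j = ⟨s_j, i_j⟩` selecting a
shard with probability `f s_j` and an index uniformly within it; the summand
`(1/f_{s_j}) (N_{s_j} v_{s_j,i_j} − u_{s_j}) + U` is an unbiased single-sample
estimator of the full-data gradient `V`, and the variance is controlled by the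
surrogate approximation constants `ε s`. -/
theorem cgdsgld_variance_bound (S d m : ℕ) (hS : 0 < S) (hd : 0 < d) (hm : 0 < m)
    (f : Fin S → ℝ) (hf : ∀ s, 0 < f s) (hsum : ∑ s, f s = 1)
    (N : Fin S → ℕ) (hN : ∀ s, 0 < N s)
    (v : (s : Fin S) → Fin (N s) → EuclideanSpace ℝ (Fin d))
    (u : Fin S → EuclideanSpace ℝ (Fin d))
    (U : EuclideanSpace ℝ (Fin d)) (hU : U = ∑ s, u s)
    (ε : Fin S → ℝ)
    (hε : ∀ s, (1 / (N s : ℝ)) * ∑ i, ‖v s i - (1 / (N s : ℝ)) • u s‖ ^ 2 ≤ ε s ^ 2)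
    (V : EuclideanSpace ℝ (Fin d)) (hV : V = ∑ s, ∑ i, v s i) :
    ∑ ω : Fin m → Σ s : Fin S, Fin (N s),
        (∏ j, f (ω j).1 * (1 / (N (ω j).1 : ℝ))) *
          ‖(1 / (m : ℝ)) •
              (∑ j, ((1 / f (ω j).1) •
                  ((N (ω j).1 : ℝ) • v (ω j).1 (ω j).2 - u (ω j).1) + U))
            - V‖ ^ 2
      ≤ (1 / (m : ℝ)) * ∑ s, ((N s : ℝ) ^ 2 / f s) * ε s ^ 2 := by
  have := Fin.pos_iff_nonempty.mp hm
  have := fun s => Fin.pos_iff_nonempty.mp (hN s)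
  simpa only [Fintype.card_fin, hU, hV] using
    cgdsgld_variance_bound_general (J := Fin m) f hf hsum v u ε
      (by simpa only [Fintype.card_fin] using hε)
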